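/- The redundant information can alternatively be written as a mutual information: Red(X,Y→Z) = I(A_{Z|Y};Y), where (A_{Z|Y},Y) is the pair of random variables on 𝒳×𝒴 with joint distribution r(x,y) = p_Y(y)·Pr(A_y = x) for p_Y(y) > 0 and r(x,y) = 0 otherwise. -/

import Mathlib

open Finset

/-- Shannon entropy of a distribution on a finite type (natural-log base). -/
noncomputable def ent {α : Type*} [Fintype α] (p : α → ℝ) : ℝ :=
  ∑ a, Real.negMulLog (p a)

/-- Mutual information between the two coordinates of a joint distribution. -/
noncomputable def mutInfo {α β : Type*} [Fintype α] [Fintype β] (q : α × β → ℝ) : ℝ :=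
  ent (fun a => ∑ b, q (a, b)) + ent (fun b => ∑ a, q (a, b)) - ent q

/-- Conditional entropy of the first coordinate given the second: H(A|B) = H(A,B) - H(B). -/
noncomputable def condEntFst {α β : Type*} [Fintype α] [Fintype β] (q : α × β → ℝ) : ℝ :=
  ent q - ent (fun b => ∑ a, q (a, b))

/-- Conditional entropy of the second coordinate given the first: H(B|A) = H(A,B) - H(A). -/
noncomputable def condEntSnd {α β : Type*} [Fintype α] [Fintype β] (q : α × β → ℝ) : ℝ :=
  ent q - ent (fun a => ∑ b, q (a, b))

section PID

variable {X Y Z : Type*} [Fintype X] [Fintype Y] [Fintype Z]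

/-- 𝒳-marginal of a joint distribution on 𝒳×𝒴×𝒵. -/
noncomputable def pX (p : X × Y × Z → ℝ) (x : X) : ℝ := ∑ y, ∑ z, p (x, y, z)

/-- 𝒴-marginal. -/
noncomputable def pY (p : X × Y × Z → ℝ) (y : Y) : ℝ := ∑ x, ∑ z, p (x, y, z)

/-- 𝒵-marginal. -/
noncomputable def pZ (p : X × Y × Z → ℝ) (z : Z) : ℝ := ∑ x, ∑ y, p (x, y, z)

/-- The do-operation: q(x,y,z) = p(x,y,z)·c(z)/p_Z(z) if p_Z(z) > 0, else 0. -/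
noncomputable def doOp (p : X × Y × Z → ℝ) (c : Z → ℝ) : X × Y × Z → ℝ :=
  fun t => if 0 < pZ p t.2.2 then p t * c t.2.2 / pZ p t.2.2 else 0

/-- (𝒳,𝒵)-marginal. -/
noncomputable def margXZ (p : X × Y × Z → ℝ) : X × Z → ℝ := fun t => ∑ y, p (t.1, y, t.2)

/-- (𝒴,𝒵)-marginal. -/
noncomputable def margYZ (p : X × Y × Z → ℝ) : Y × Z → ℝ := fun t => ∑ x, p (x, t.1, t.2)

/-- (𝒳,𝒴)-marginal. -/
noncomputable def margXY (p : X × Y × Z → ℝ) : X × Y → ℝ := fun t => ∑ z, p (t.1, t.2, z)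

/-- c_y(z) = Pr(Z = z | Y = y). -/
noncomputable def cy (p : X × Y × Z → ℝ) (y : Y) : Z → ℝ :=
  fun z => (∑ x, p (x, y, z)) / pY p y

/-- The distribution of (A_y, B_y, C_y) = do(p | c_y). -/
noncomputable def doy (p : X × Y × Z → ℝ) (y : Y) : X × Y × Z → ℝ := doOp p (cy p y)

/-- c^x(z) = Pr(Z = z | X = x). -/
noncomputable def cx (p : X × Y × Z → ℝ) (x : X) : Z → ℝ :=
  fun z => (∑ y, p (x, y, z)) / pX p x

/-- The distribution of (A^x, B^x, C^x) = do(p | c^x). -/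
noncomputable def dox (p : X × Y × Z → ℝ) (x : X) : X × Y × Z → ℝ := doOp p (cx p x)

/-- Unique information Un(X→Z|Y) = Σ_{y : p_Y(y)>0} p_Y(y)·I(A_y;C_y). -/
noncomputable def Un (p : X × Y × Z → ℝ) : ℝ :=
  ∑ y ∈ Finset.univ.filter (fun y => 0 < pY p y), pY p y * mutInfo (margXZ (doy p y))

/-- Unique information Un(Y→Z|X) = Σ_{x : p_X(x)>0} p_X(x)·I(B^x;C^x). -/
noncomputable def UnYX (p : X × Y × Z → ℝ) : ℝ :=
  ∑ x ∈ Finset.univ.filter (fun x => 0 < pX p x), pX p x * mutInfo (margYZ (dox p x))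

/-- Redundant information Red(X,Y→Z) = I(X;Z) − Un(X→Z|Y). -/
noncomputable def Red (p : X × Y × Z → ℝ) : ℝ := mutInfo (margXZ p) - Un p

/-- Conditional mutual information I(X;Z|Y) = H(X,Y) + H(Y,Z) − H(Y) − H(X,Y,Z). -/
noncomputable def condMI (p : X × Y × Z → ℝ) : ℝ :=
  ent (margXY p) + ent (margYZ p) - ent (pY p) - ent p

/-- Synergistic information Syn(X,Y→Z) = I(X;Z|Y) − Un(X→Z|Y). -/
noncomputable def Syn (p : X × Y × Z → ℝ) : ℝ := condMI p - Un p

end PID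

/-! Let `A` be drawn from the conditional law `p(x|z)` after `Z`, so that `Y → Z → A` is a Markov
chain. Then `I(X;Z) = I(A;Z)`, the unique information is `I(A;Z|Y)`, and `r` is the law of `(A, Y)`.
The theorem is thus the chain rule `I(A;Z) = I(A;Y) + I(A;Z|Y)`, valid because `A` depends on
`(Y, Z)` only through `Z`: writing each information as `H(A) - H(A|·)`, the claim becomes
`H(A) - H(A|Z) = (H(A) - H(A|Y)) + (H(A|Y) - H(A|Z))`. -/

open Matrix

theorem sum_mul_div_sum_of_nonneg {ι 𝕜 : Type*} [Semifield 𝕜] [PartialOrder 𝕜]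
    [IsOrderedAddMonoid 𝕜] {s : Finset ι} {f : ι → 𝕜} (hf : ∀ i ∈ s, 0 ≤ f i) {i : ι}
    (hi : i ∈ s) : (∑ j ∈ s, f j) * (f i / ∑ j ∈ s, f j) = f i :=
  mul_div_cancel_of_imp' fun h => (Finset.sum_eq_zero_iff_of_nonneg hf).1 h i hi

section Kernel

variable {α β γ : Type*}

/-- The joint distribution on `α × β` obtained by drawing `b` from `c` and then `a` from the row
`K b`. A kernel from `β` to `α` is encoded as a matrix, so that `c ᵥ* K` is the law of `a` and
`C * K` is the composition of kernels. -/
def kernelJoint (c : β → ℝ) (K : Matrix β α ℝ) : α × β → ℝ :=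
  fun t => c t.2 * K t.2 t.1

/-- The rows of `K` have total mass one on the support of `c`, i.e. `K` is a normalized kernel
`c`-almost everywhere. Rows off the support are left free, because conditional probabilities given
null events are `0 / 0 = 0`. -/
def RowSumOneOn [Fintype α] (c : β → ℝ) (K : Matrix β α ℝ) : Prop :=
  ∀ b, c b ≠ 0 → ∑ a, K b a = 1

theorem sum_kernelJoint_snd [Fintype β] (c : β → ℝ) (K : Matrix β α ℝ) :
    (fun a => ∑ b, kernelJoint c K (a, b)) = c ᵥ* K :=
  rfl

variable [Fintype α]

theorem RowSumOneOn.mul_sum {c : β → ℝ} {K : Matrix β α ℝ} (hK : RowSumOneOn c K) (b : β) :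
    c b * ∑ a, K b a = c b := by
  by_cases hb : c b = 0
  · rw [hb, zero_mul]
  · rw [hK b hb, mul_one]

theorem RowSumOneOn.sum_kernelJoint_fst {c : β → ℝ} {K : Matrix β α ℝ} (hK : RowSumOneOn c K) :
    (fun b => ∑ a, kernelJoint c K (a, b)) = c := by
  funext b
  simp only [kernelJoint, ← Finset.mul_sum, hK.mul_sum]

theorem RowSumOneOn.vecMul [Fintype γ] {π : γ → ℝ} {C : Matrix γ β ℝ} {K : Matrix β α ℝ}
    (hK : ∀ y, π y ≠ 0 → RowSumOneOn (C y) K) : RowSumOneOn (π ᵥ* C) K := by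
  intro z hz
  obtain ⟨y, -, hy⟩ := Finset.exists_ne_zero_of_sum_ne_zero hz
  exact hK y (left_ne_zero_of_mul hy) z (right_ne_zero_of_mul hy)

variable [Fintype β]

theorem RowSumOneOn.ent_kernelJoint {c : β → ℝ} {K : Matrix β α ℝ} (hK : RowSumOneOn c K) :
    ent (kernelJoint c K) = ent c + c ⬝ᵥ fun b => ent (K b) := by
  unfold ent dotProduct
  rw [Fintype.sum_prod_type_right, ← Finset.sum_add_distrib]
  refine Finset.sum_congr rfl fun b _ => ?_
  calc ∑ a, Real.negMulLog (c b * K b a)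
      = ∑ a, (K b a * Real.negMulLog (c b) + c b * Real.negMulLog (K b a)) := by
        simp only [Real.negMulLog_mul]
    _ = (c b * ∑ a, K b a) * -Real.log (c b) + c b * ∑ a, Real.negMulLog (K b a) := by
        rw [Finset.sum_add_distrib, ← Finset.sum_mul, ← Finset.mul_sum, Real.negMulLog]
        ring
    _ = Real.negMulLog (c b) + c b * ∑ a, Real.negMulLog (K b a) := by
        rw [hK.mul_sum, Real.negMulLog]
        ring

theorem RowSumOneOn.mutInfo_kernelJoint {c : β → ℝ} {K : Matrix β α ℝ} (hK : RowSumOneOn c K) :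
    mutInfo (kernelJoint c K) = ent (c ᵥ* K) - c ⬝ᵥ fun b => ent (K b) := by
  rw [mutInfo, sum_kernelJoint_snd, hK.sum_kernelJoint_fst, hK.ent_kernelJoint]
  ring

theorem RowSumOneOn.mul {π : γ → ℝ} {C : Matrix γ β ℝ} {K : Matrix β α ℝ}
    (hC : RowSumOneOn π C) (hK : ∀ y, π y ≠ 0 → RowSumOneOn (C y) K) :
    RowSumOneOn π (C * K) := by
  intro y hy
  calc ∑ x, (C * K) y x = ∑ z, C y z * ∑ x, K z x := by
        simp only [Matrix.mul_apply, Finset.mul_sum]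
        exact Finset.sum_comm
    _ = 1 := by simp only [(hK y hy).mul_sum, hC y hy]

theorem mutInfo_kernelJoint_vecMul [Fintype γ] {π : γ → ℝ} {C : Matrix γ β ℝ}
    {K : Matrix β α ℝ} (hC : RowSumOneOn π C) (hK : ∀ y, π y ≠ 0 → RowSumOneOn (C y) K) :
    mutInfo (kernelJoint (π ᵥ* C) K) =
      mutInfo (kernelJoint π (C * K)) + π ⬝ᵥ fun y => mutInfo (kernelJoint (C y) K) := by
  have cond_mutInfo : (π ⬝ᵥ fun y => mutInfo (kernelJoint (C y) K)) =
      (π ⬝ᵥ fun y => ent ((C * K) y)) - (π ᵥ* C) ⬝ᵥ fun z => ent (K z) := by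
    rw [← dotProduct_mulVec, ← dotProduct_sub]
    refine Finset.sum_congr rfl fun y _ => ?_
    change π y * mutInfo (kernelJoint (C y) K) =
      π y * (ent (C y ᵥ* K) - C y ⬝ᵥ fun z => ent (K z))
    by_cases hy : π y = 0
    · simp only [hy, zero_mul]
    · rw [(hK y hy).mutInfo_kernelJoint]
  rw [(RowSumOneOn.vecMul hK).mutInfo_kernelJoint, (hC.mul hK).mutInfo_kernelJoint, cond_mutInfo,
    vecMul_vecMul]
  ring

end Kernel

section JointDistribution

variable {X Y Z : Type*} {p : X × Y × Z → ℝ}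

theorem margXZ_nonneg [Fintype Y] (hp : ∀ t, 0 ≤ p t) (t : X × Z) : 0 ≤ margXZ p t :=
  Finset.sum_nonneg fun _ _ => hp _

variable [Fintype X]

/-- The conditional distribution of `X` given `Z`, as a kernel from `Z` to `X`; its rows vanish
where `pZ p` does. -/
noncomputable def condXGivenZ [Fintype Y] (p : X × Y × Z → ℝ) : Matrix Z X ℝ :=
  of fun z x => margXZ p (x, z) / pZ p z

theorem margYZ_nonneg (hp : ∀ t, 0 ≤ p t) (t : Y × Z) : 0 ≤ margYZ p t :=
  Finset.sum_nonneg fun _ _ => hp _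

theorem sum_margXZ_fst [Fintype Y] (p : X × Y × Z → ℝ) (z : Z) :
    ∑ x, margXZ p (x, z) = pZ p z :=
  rfl

theorem sum_margYZ_fst [Fintype Y] (p : X × Y × Z → ℝ) (z : Z) :
    ∑ y, margYZ p (y, z) = pZ p z :=
  Finset.sum_comm

theorem sum_margYZ_snd [Fintype Z] (p : X × Y × Z → ℝ) (y : Y) :
    ∑ z, margYZ p (y, z) = pY p y :=
  Finset.sum_comm

theorem pY_nonneg [Fintype Z] (hp : ∀ t, 0 ≤ p t) (y : Y) : 0 ≤ pY p y :=
  Finset.sum_nonneg fun _ _ => Finset.sum_nonneg fun _ _ => hp _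

theorem pZ_nonneg [Fintype Y] (hp : ∀ t, 0 ≤ p t) (z : Z) : 0 ≤ pZ p z :=
  Finset.sum_nonneg fun _ _ => Finset.sum_nonneg fun _ _ => hp _

theorem kernelJoint_pZ_condXGivenZ [Fintype Y] (hp : ∀ t, 0 ≤ p t) :
    kernelJoint (pZ p) (condXGivenZ p) = margXZ p :=
  funext fun t =>
    sum_mul_div_sum_of_nonneg (fun x _ => margXZ_nonneg hp (x, t.2)) (Finset.mem_univ t.1)

theorem rowSumOneOn_condXGivenZ [Fintype Y] (p : X × Y × Z → ℝ) :
    RowSumOneOn (pZ p) (condXGivenZ p) := by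
  intro z hz
  simp only [condXGivenZ, of_apply, ← Finset.sum_div, sum_margXZ_fst, div_self hz]

theorem margXZ_doOp [Fintype Y] (hp : ∀ t, 0 ≤ p t) (c : Z → ℝ) :
    margXZ (doOp p c) = kernelJoint c (condXGivenZ p) := by
  funext ⟨x, z⟩
  simp only [kernelJoint, condXGivenZ, of_apply, margXZ, doOp]
  rcases (pZ_nonneg hp z).eq_or_lt' with hz | hz
  · simp [hz]
  · simp only [hz, if_true, ← Finset.sum_div, ← Finset.sum_mul]
    ring

variable [Fintype Z]

theorem rowSumOneOn_cy (p : X × Y × Z → ℝ) : RowSumOneOn (pY p) (of (cy p)) := by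
  intro y hy
  calc ∑ z, cy p y z = (∑ z, margYZ p (y, z)) / pY p y := (Finset.sum_div ..).symm
    _ = 1 := by rw [sum_margYZ_snd, div_self hy]

theorem pY_mul_cy (hp : ∀ t, 0 ≤ p t) (y : Y) (z : Z) : pY p y * cy p y z = margYZ p (y, z) := by
  have h := sum_mul_div_sum_of_nonneg (fun z _ => margYZ_nonneg hp (y, z)) (Finset.mem_univ z)
  rwa [sum_margYZ_snd] at h

variable [Fintype Y]

theorem pY_vecMul_cy (hp : ∀ t, 0 ≤ p t) : pY p ᵥ* of (cy p) = pZ p := by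
  funext z
  rw [← sum_margYZ_fst]
  exact Finset.sum_congr rfl fun y _ => pY_mul_cy hp y z

theorem pZ_ne_zero_of_cy_ne_zero (hp : ∀ t, 0 ≤ p t) {y : Y} {z : Z} (h : cy p y z ≠ 0) :
    pZ p z ≠ 0 := by
  have hyz : margYZ p (y, z) ≠ 0 := (div_ne_zero_iff.1 h).1
  rw [← sum_margYZ_fst]
  exact fun hz => hyz <| (Finset.sum_eq_zero_iff_of_nonneg fun y _ => margYZ_nonneg hp (y, z)).1 hz
    y (Finset.mem_univ y)

theorem pX_doOp (hp : ∀ t, 0 ≤ p t) (c : Z → ℝ) : pX (doOp p c) = c ᵥ* condXGivenZ p := by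
  rw [← sum_kernelJoint_snd, ← margXZ_doOp hp]
  exact funext fun x => Finset.sum_comm

theorem Un_eq_dotProduct (hp : ∀ t, 0 ≤ p t) :
    Un p = pY p ⬝ᵥ fun y => mutInfo (kernelJoint (cy p y) (condXGivenZ p)) := by
  simp only [Un, doy, margXZ_doOp hp]
  exact Finset.sum_filter_of_ne fun y _ h =>
    (pY_nonneg hp y).lt_of_ne' (left_ne_zero_of_mul h)

theorem kernelJoint_pY_cy_mul_condXGivenZ (hp : ∀ t, 0 ≤ p t) :
    kernelJoint (pY p) (of (cy p) * condXGivenZ p) =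
      fun t : X × Y => if 0 < pY p t.2 then pY p t.2 * pX (doy p t.2) t.1 else 0 := by
  funext ⟨x, y⟩
  rcases (pY_nonneg hp y).eq_or_lt' with hy | hy
  · simp [kernelJoint, hy]
  · simp only [hy, if_true, kernelJoint, doy, pX_doOp hp]
    rfl

end JointDistribution

theorem stmt9 {X Y Z : Type*} [Fintype X] [Fintype Y] [Fintype Z]
    [Nonempty X] [Nonempty Y] [Nonempty Z]
    (p : X × Y × Z → ℝ) (hp0 : ∀ t, 0 ≤ p t) (hp1 : ∑ t, p t = 1) :
    Red p = mutInfo (fun t : X × Y =>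
      if 0 < pY p t.2 then pY p t.2 * pX (doy p t.2) t.1 else 0) := by
  have hK (y : Y) (_ : pY p y ≠ 0) : RowSumOneOn (of (cy p) y) (condXGivenZ p) :=
    fun z hz => rowSumOneOn_condXGivenZ p z (pZ_ne_zero_of_cy_ne_zero hp0 hz)
  have chain_rule := mutInfo_kernelJoint_vecMul (rowSumOneOn_cy p) hK
  rw [pY_vecMul_cy hp0, kernelJoint_pZ_condXGivenZ hp0, kernelJoint_pY_cy_mul_condXGivenZ hp0]
    at chain_rule
  rw [Red, Un_eq_dotProduct hp0]
  exact sub_eq_of_eq_add chain_rule
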